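/- Let N ≥ 2 and p > 1, and if N ≥ 3 assume additionally p + 1 < 2N/(N-2). Then there exists α* > 0 such that for every α > α*, S^rad_{α,p} > S_{α,p} (strict inequality between the radial ground-state level and the ground-state level). -/

import Mathlib

open MeasureTheory Metric Set Filter

noncomputable section

abbrev E (N : ℕ) := EuclideanSpace ℝ (Fin N)

/-- The Laplacian: sum of pure second partial derivatives. -/
def lap {N : ℕ} (u : E N → ℝ) (x : E N) : ℝ :=
  ∑ i, fderiv ℝ (fun y => fderiv ℝ u y (EuclideanSpace.single i 1)) x (EuclideanSpace.single i 1)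
/-- The admissible class 𝒞: C¹ functions on the closed unit ball, vanishing on the
boundary sphere, not identically zero. -/
def memC {N : ℕ} (u : E N → ℝ) : Prop :=
  ContDiffOn ℝ 1 u (closedBall 0 1) ∧
  (∀ x : E N, ‖x‖ = 1 → u x = 0) ∧
  ∃ x ∈ closedBall (0 : E N) 1, u x ≠ 0

/-- The Rayleigh quotient R_{α,p}. -/
def ray {N : ℕ} (α p : ℝ) (u : E N → ℝ) : ℝ :=
  (∫ x in ball (0 : E N) 1, ‖gradient u x‖ ^ 2) /
    (∫ x in ball (0 : E N) 1, ‖x‖ ^ α * |u x| ^ (p + 1)) ^ (2 / (p + 1))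

/-- The ground-state level S_{α,p}. -/
def Sval (N : ℕ) (α p : ℝ) : ℝ := sInf {c | ∃ u : E N → ℝ, memC u ∧ ray α p u = c}

/-- A function is radial if its value depends only on the norm. -/
def radial {N : ℕ} (u : E N → ℝ) : Prop := ∀ x y : E N, ‖x‖ = ‖y‖ → u x = u y

/-- The radial ground-state level S^rad_{α,p}. -/
def SradVal (N : ℕ) (α p : ℝ) : ℝ :=
  sInf {c | ∃ u : E N → ℝ, memC u ∧ radial u ∧ ray α p u = c}

lemma aux_cs (d : ℕ) (g h : ℝ → ℝ) (hg : ContinuousOn g (Icc 0 1)) (hh : ContinuousOn h (Icc 0 1))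
    (hd : ∀ r ∈ Ioo (0:ℝ) 1, HasDerivAt g (h r) r) (g1 : g 1 = 0) (r : ℝ) (hr : r ∈ Ioo (0:ℝ) 1) :
    (g r)^2 ≤ (1 - r) * (r^d)⁻¹ * ∫ s in Ioo (0:ℝ) 1, s^d * (h s)^2 := by
  obtain ⟨h0, h1⟩ := hr
  have hsub : Icc r 1 ⊆ Icc 0 1 := Icc_subset_Icc_left h0.le
  have hhr := hh.mono hsub
  have hi : IntervalIntegrable h volume r 1 :=
    ContinuousOn.intervalIntegrable (by rwa [uIcc_of_le h1.le])
  have hi2 : IntervalIntegrable (fun s => (h s)^2) volume r 1 :=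
    ContinuousOn.intervalIntegrable (by rw [uIcc_of_le h1.le]; exact hhr.pow 2)
  have ftc := intervalIntegral.integral_eq_sub_of_hasDerivAt_of_le h1.le (hg.mono hsub)
    (fun x hx => hd x ⟨h0.trans hx.1, hx.2⟩) hi
  set B := ∫ s in r..1, h s with hB
  set A := ∫ s in r..1, (h s)^2 with hA
  have hgB : (g r)^2 = B^2 := by rw [ftc, g1]; ring
  have hL : 0 < 1 - r := by linarith
  have key : B^2 ≤ (1 - r) * A := by
    have h3 : 0 ≤ ∫ s in r..1, (h s - B / (1 - r))^2 :=
      intervalIntegral.integral_nonneg h1.le (fun _ _ => sq_nonneg _)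
    have h4 : ∫ s in r..1, (h s - B / (1 - r))^2
        = A - 2 * (B/(1-r)) * B + (1 - r) * (B/(1-r))^2 := by
      have : ∀ s, (h s - B / (1 - r))^2 = (h s)^2 - (2 * (B/(1-r))) * h s + (B/(1-r))^2 := by
        intro s; ring
      simp_rw [this]
      rw [intervalIntegral.integral_add (hi2.sub (hi.const_mul _)) (by simp),
        intervalIntegral.integral_sub hi2 (hi.const_mul _), intervalIntegral.integral_const_mul]
      simp [hA, hB]
    rw [h4] at h3
    have : A - 2 * (B/(1-r)) * B + (1 - r) * (B/(1-r))^2 = (A * (1-r) - B^2)/(1-r) := by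
      field_simp; ring
    rw [this] at h3
    have := (div_nonneg_iff.mp h3)
    rcases this with h | h <;> nlinarith [h.1, h.2]
  have hint : IntegrableOn (fun s => s^d * (h s)^2) (Ioo 0 1) :=
    ((((continuous_pow d).continuousOn).mul (hh.pow 2)).integrableOn_Icc).mono_set Ioo_subset_Icc_self
  have hA2 : r^d * A ≤ ∫ s in Ioo (0:ℝ) 1, s^d * (h s)^2 := by
    rw [hA, intervalIntegral.integral_of_le h1.le, integral_Ioc_eq_integral_Ioo, ← integral_const_mul]
    have hsub2 : Ioo r 1 ⊆ Ioo 0 1 := Ioo_subset_Ioo_left h0.le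
    calc _ ≤ ∫ s in Ioo r 1, s^d * (h s)^2 := by
          apply setIntegral_mono_on
          · exact (((hhr.pow 2).integrableOn_Icc).mono_set Ioo_subset_Icc_self).const_mul _
          · exact hint.mono_set hsub2
          · exact measurableSet_Ioo
          · intro x hx
            have := pow_le_pow_left₀ h0.le hx.1.le d
            exact mul_le_mul_of_nonneg_right this (sq_nonneg _)
      _ ≤ _ := by
          apply setIntegral_mono_set hint
          · refine (ae_restrict_iff' measurableSet_Ioo).2 (ae_of_all _ fun x hx => ?_)
            have := hx.1.le
            show 0 ≤ _
            positivity
          · exact hsub2.eventuallyLE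
  have hrd : 0 < r^d := by positivity
  rw [hgB]
  calc B^2 ≤ (1-r) * A := key
    _ = (1-r) * (r^d)⁻¹ * (r^d * A) := by field_simp
    _ ≤ _ := by gcongr

lemma aux_gamma (q β : ℝ) (hq : 0 < q) (hβ : 0 < β) :
    ∫ r in Ioo (0:ℝ) 1, (1 - r)^q * Real.exp (-(β * (1 - r))) ≤ (1/β)^(q+1) * Real.Gamma (q+1) := by
  rw [← integral_Ioc_eq_integral_Ioo, ← intervalIntegral.integral_of_le zero_le_one]
  rw [intervalIntegral.integral_comp_sub_left (fun s => s^q * Real.exp (-(β * s))) 1]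
  have := Real.integral_rpow_mul_exp_neg_mul_Ioi (a := q+1) (r := β) (by linarith) hβ
  rw [← this]
  simp only [sub_self, sub_zero, add_sub_cancel_right]
  rw [intervalIntegral.integral_of_le zero_le_one]
  apply setIntegral_mono_set
  · have := integrableOn_rpow_mul_exp_neg_mul_rpow (p := 1) (s := q) (b := β) (by linarith) one_pos hβ
    simpa using this
  · refine (ae_restrict_iff' measurableSet_Ioi).2 (ae_of_all _ fun x hx => ?_)
    have : 0 < x := hx
    show 0 ≤ _
    positivity
  · exact Ioc_subset_Ioi_self.eventuallyLE

lemma aux_1d (d : ℕ) (q α : ℝ) (hq : 0 < q) (hα : 0 < α) (hβ : 0 < α + d - d * q)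
    (g h : ℝ → ℝ) (hg : ContinuousOn g (Icc 0 1)) (hh : ContinuousOn h (Icc 0 1))
    (hd : ∀ r ∈ Ioo (0:ℝ) 1, HasDerivAt g (h r) r) (g1 : g 1 = 0) :
    ∫ r in Ioo (0:ℝ) 1, r^d * (r^α * |g r|^(2*q)) ≤
      (∫ s in Ioo (0:ℝ) 1, s^d * (h s)^2)^q * ((1/(α + d - d * q))^(q+1) * Real.Gamma (q+1)) := by
  set A := ∫ s in Ioo (0:ℝ) 1, s^d * (h s)^2 with hA
  have hA0 : 0 ≤ A := by
    apply setIntegral_nonneg measurableSet_Ioo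
    intro x hx
    have := hx.1.le
    positivity
  set β := α + d - d * q with hβd
  refine le_trans ?_ (mul_le_mul_of_nonneg_left (aux_gamma q β hq hβ) (by positivity))
  rw [← integral_const_mul]
  apply setIntegral_mono_on
  · refine ContinuousOn.integrableOn_Icc ?_ |>.mono_set Ioo_subset_Icc_self
    refine ((continuous_pow d).continuousOn).mul (ContinuousOn.mul ?_ ?_)
    · exact (Real.continuous_rpow_const hα.le).continuousOn
    · exact hg.abs.rpow_const (fun _ _ => Or.inr (by positivity))
  · refine ContinuousOn.integrableOn_Icc ?_ |>.mono_set Ioo_subset_Icc_self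
    apply Continuous.continuousOn
    refine continuous_const.mul (Continuous.mul ?_ (by fun_prop))
    exact (Real.continuous_rpow_const hq.le).comp (by fun_prop)
  · exact measurableSet_Ioo
  · intro r hr
    have hcs := aux_cs d g h hg hh hd g1 r hr
    rw [← hA] at hcs
    obtain ⟨h0, h1⟩ := hr
    have hL : 0 < 1 - r := by linarith
    have e1 : |g r|^(2*q) ≤ ((1 - r) * (r^d)⁻¹ * A)^q := by
      rw [Real.rpow_mul (abs_nonneg _)]
      have : |g r|^(2:ℝ) = (g r)^2 := by
        rw [show (2:ℝ) = ((2:ℕ):ℝ) by norm_num, Real.rpow_natCast, sq_abs]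
      rw [this]
      exact Real.rpow_le_rpow (sq_nonneg _) hcs hq.le
    have e2 : ((1 - r) * (r^d)⁻¹ * A)^q = (1-r)^q * r^(-(d*q)) * A^q := by
      rw [Real.mul_rpow (by positivity) hA0, Real.mul_rpow hL.le (by positivity)]
      congr 2
      rw [← Real.rpow_natCast, ← Real.rpow_neg h0.le, ← Real.rpow_mul h0.le]
      congr 1; ring
    have e3 : r^d * (r^α * r^(-(d*q))) = r^β := by
      rw [← Real.rpow_natCast, ← Real.rpow_add h0, ← Real.rpow_add h0]
      congr 1; rw [hβd]; ring
    have e4 : r^β ≤ Real.exp (-(β * (1 - r))) := by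
      have : r ≤ Real.exp (-(1-r)) := by
        have := Real.add_one_le_exp (-(1-r)); linarith
      calc r^β ≤ (Real.exp (-(1-r)))^β := Real.rpow_le_rpow h0.le this hβ.le
        _ = _ := by rw [← Real.exp_mul]; congr 1; ring
    calc r^d * (r^α * |g r|^(2*q)) ≤ r^d * (r^α * ((1-r)^q * r^(-(d*q)) * A^q)) := by
          rw [← e2]; gcongr
      _ = A^q * ((1-r)^q * (r^d * (r^α * r^(-(d*q))))) := by ring
      _ ≤ _ := by rw [e3]; gcongr

lemma aux_polar {N : ℕ} (hN : 2 ≤ N) (f : ℝ → ℝ) :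
    ∫ x in ball (0 : E N) 1, f ‖x‖ =
      (N * volume.real (ball (0 : E N) 1)) * ∫ y in Ioo (0:ℝ) 1, y^(N-1) * f y := by
  have : Nonempty (Fin N) := ⟨⟨0, by omega⟩⟩
  have h := integral_fun_norm_addHaar (volume : Measure (E N)) ((Iio (1:ℝ)).indicator f)
  have e1 : ∀ x : E N, (Iio (1:ℝ)).indicator f ‖x‖ = (ball (0 : E N) 1).indicator (fun x => f ‖x‖) x := by
    intro x
    simp [indicator]
  simp_rw [e1] at h
  rw [integral_indicator measurableSet_ball] at h
  rw [h, finrank_euclideanSpace_fin, nsmul_eq_mul, smul_eq_mul, mul_assoc]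
  congr 2
  have e2 : ∀ y, y^(N-1) • (Iio (1:ℝ)).indicator f y = (Iio (1:ℝ)).indicator (fun y => y^(N-1) * f y) y := by
    intro y; by_cases hy : y < 1 <;> simp [indicator, hy]
  simp_rw [e2]
  rw [setIntegral_indicator measurableSet_Iio, Ioi_inter_Iio]

lemma aux_norm_grad {N : ℕ} (u : E N → ℝ) (x : E N) : ‖gradient u x‖ = ‖fderiv ℝ u x‖ := by
  rw [← toDual_gradient, LinearIsometryEquiv.norm_map]

lemma aux_cont {N : ℕ} (u : E N → ℝ) (hu : ContDiffOn ℝ 1 u (closedBall 0 1)) :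
    ContinuousOn (fderivWithin ℝ u (closedBall 0 1)) (closedBall 0 1) := by
  apply hu.continuousOn_fderivWithin _ le_rfl
  apply uniqueDiffOn_convex (convex_closedBall _ _)
  rw [interior_closedBall _ one_ne_zero]
  exact ⟨0, by simp⟩

lemma aux_fd {N : ℕ} (u : E N → ℝ) {x : E N} (hx : x ∈ ball (0 : E N) 1) :
    fderivWithin ℝ u (closedBall 0 1) x = fderiv ℝ u x :=
  fderivWithin_of_mem_nhds (closedBall_mem_nhds_of_mem hx)

lemma aux_hasfd {N : ℕ} (u : E N → ℝ) (hu : ContDiffOn ℝ 1 u (closedBall 0 1))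
    {x : E N} (hx : x ∈ ball (0 : E N) 1) : HasFDerivAt u (fderiv ℝ u x) x :=
  ((hu.differentiableOn one_ne_zero).differentiableAt (closedBall_mem_nhds_of_mem hx)).hasFDerivAt

lemma aux_grad_int {N : ℕ} (u : E N → ℝ) (hu : ContDiffOn ℝ 1 u (closedBall 0 1)) :
    IntegrableOn (fun x => ‖gradient u x‖ ^ 2) (ball (0 : E N) 1) := by
  have h1 : IntegrableOn (fun x => ‖fderivWithin ℝ u (closedBall 0 1) x‖^2) (closedBall (0 : E N) 1) :=
    ((aux_cont u hu).norm.pow 2).integrableOn_compact (isCompact_closedBall _ _)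
  refine (h1.mono_set ball_subset_closedBall).congr_fun ?_ measurableSet_ball
  intro x hx
  simp only [aux_norm_grad, aux_fd u hx]

lemma aux_den_pos {N : ℕ} (hN : 2 ≤ N) (α p : ℝ) (hα : 0 < α) (hp : 1 < p) (u : E N → ℝ)
    (hu : memC u) : 0 < ∫ x in ball (0 : E N) 1, ‖x‖ ^ α * |u x| ^ (p + 1) := by
  have : Nonempty (Fin N) := ⟨⟨0, by omega⟩⟩
  obtain ⟨hc, hb, x0, hx0, hne⟩ := hu
  have hx0' : x0 ∈ ball (0 : E N) 1 := by
    rw [mem_ball_zero_iff]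
    rw [mem_closedBall_zero_iff] at hx0
    exact lt_of_le_of_ne hx0 (fun h => hne (hb _ h))
  have hcont : ContinuousOn (fun x : E N => ‖x‖ ^ α * |u x| ^ (p + 1)) (closedBall 0 1) := by
    refine ContinuousOn.mul ?_ ?_
    · exact continuousOn_id.norm.rpow_const (fun _ _ => Or.inr hα.le)
    · exact hc.continuousOn.abs.rpow_const (fun _ _ => Or.inr (by linarith))
  rw [setIntegral_pos_iff_support_of_nonneg_ae]
  · have hopen : IsOpen (ball (0 : E N) 1 ∩ u ⁻¹' {0}ᶜ) :=
      (hc.continuousOn.mono ball_subset_closedBall).isOpen_inter_preimage isOpen_ball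
        isOpen_compl_singleton
    have hpos := hopen.measure_pos (volume : Measure (E N)) ⟨x0, hx0', hne⟩
    have h0 : volume ((ball (0 : E N) 1 ∩ u ⁻¹' {0}ᶜ) \ {0}) = volume (ball (0 : E N) 1 ∩ u ⁻¹' {0}ᶜ) :=
      measure_sdiff_null (by simp)
    rw [← h0] at hpos
    refine lt_of_lt_of_le hpos (measure_mono ?_)
    rintro x ⟨⟨hx1, hx2⟩, hx3⟩
    refine ⟨?_, hx1⟩
    have a1 : 0 < ‖x‖ := norm_pos_iff.2 hx3
    have a2 : 0 < |u x| := abs_pos.2 hx2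
    simp only [Function.mem_support]
    positivity
  · exact ae_of_all _ fun x => by show 0 ≤ _; positivity
  · exact (hcont.integrableOn_compact (isCompact_closedBall _ _)).mono_set ball_subset_closedBall

lemma aux_rad {N : ℕ} (hN : 2 ≤ N) (α p : ℝ) (hα : 0 < α) (hp : 1 < p)
    (hβ : 0 < α + (N - 1 : ℕ) - (N - 1 : ℕ) * ((p+1)/2)) (u : E N → ℝ) (hu : memC u) (hr : radial u) :
    ∃ A : ℝ, 0 ≤ A ∧ (N * volume.real (ball (0 : E N) 1)) * A ≤ ∫ x in ball (0 : E N) 1, ‖gradient u x‖ ^ 2 ∧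
     ∫ x in ball (0 : E N) 1, ‖x‖ ^ α * |u x| ^ (p + 1) ≤ (N * volume.real (ball (0 : E N) 1)) *
      (A^((p+1)/2) * ((1/(α + (N - 1 : ℕ) - (N - 1 : ℕ) * ((p+1)/2)))^((p+1)/2+1) * Real.Gamma ((p+1)/2+1))) := by
  have hne : Nonempty (Fin N) := ⟨⟨0, by omega⟩⟩
  obtain ⟨hc, hb, -⟩ := hu
  set e : E N := EuclideanSpace.single ⟨0, by omega⟩ 1 with he
  have hen : ‖e‖ = 1 := by simp [he]
  set g : ℝ → ℝ := fun r => u (r • e) with hg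
  set h : ℝ → ℝ := fun r => fderivWithin ℝ u (closedBall 0 1) (r • e) e with hh
  have hmap : MapsTo (fun r : ℝ => r • e) (Icc 0 1) (closedBall (0 : E N) 1) := by
    intro r hr
    simp [norm_smul, hen, abs_of_nonneg hr.1, hr.2]
  have hl : Continuous (fun r : ℝ => r • e) := by fun_prop
  have hgc : ContinuousOn g (Icc 0 1) := hc.continuousOn.comp hl.continuousOn hmap
  have hhc : ContinuousOn h (Icc 0 1) :=
    ((aux_cont u hc).comp hl.continuousOn hmap).clm_apply continuousOn_const
  have hdir : ∀ v : E N, ‖v‖ = 1 → ∀ r ∈ Ioo (0:ℝ) 1,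
      HasDerivAt (fun t : ℝ => u (t • v)) (fderiv ℝ u (r • v) v) r := by
    intro v hv r hr
    have hm : r • v ∈ ball (0 : E N) 1 := by
      simp [norm_smul, hv, abs_of_nonneg hr.1.le, hr.2]
    have h2 : HasDerivAt (fun t : ℝ => t • v) v r := by
      simpa using (hasDerivAt_id r).smul_const v
    exact (aux_hasfd u hc hm).comp_hasDerivAt r h2
  have hd : ∀ r ∈ Ioo (0:ℝ) 1, HasDerivAt g (h r) r := by
    intro r hr
    have hm : r • e ∈ ball (0 : E N) 1 := by
      simp [norm_smul, hen, abs_of_nonneg hr.1.le, hr.2]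
    have := hdir e hen r hr
    simp only [hh, aux_fd u hm]
    exact this
  have g1 : g 1 = 0 := hb _ (by simp [hen])
  have ug : ∀ x, u x = g ‖x‖ := fun x => hr _ _ (by simp [norm_smul, hen])
  have hgrad : ∀ x ∈ ball (0 : E N) 1, x ≠ 0 → (h ‖x‖)^2 ≤ ‖gradient u x‖^2 := by
    intro x hx hx0
    have hxp : 0 < ‖x‖ := norm_pos_iff.2 hx0
    have hx1 : ‖x‖ < 1 := by simpa using hx
    set v : E N := ‖x‖⁻¹ • x with hv
    have hvn : ‖v‖ = 1 := by simp [hv, norm_smul, hxp.ne']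
    have hxv : ‖x‖ • v = x := by rw [hv, smul_smul, mul_inv_cancel₀ hxp.ne', one_smul]
    have d1 := hdir v hvn ‖x‖ ⟨hxp, hx1⟩
    have d2 := hd ‖x‖ ⟨hxp, hx1⟩
    have heq : (fun t : ℝ => u (t • v)) = g := by
      funext t
      exact hr _ _ (by simp [norm_smul, hen, hvn])
    rw [heq, hxv] at d1
    rw [d2.unique d1, aux_norm_grad]
    apply sq_le_sq'
    · have := (fderiv ℝ u x).le_opNorm v
      rw [hvn, mul_one, Real.norm_eq_abs] at this
      exact neg_le_of_abs_le this
    · have := (fderiv ℝ u x).le_opNorm v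
      rw [hvn, mul_one, Real.norm_eq_abs] at this
      exact le_of_abs_le this
  refine ⟨∫ s in Ioo (0:ℝ) 1, s^(N-1) * (h s)^2, ?_, ?_, ?_⟩
  · apply setIntegral_nonneg measurableSet_Ioo
    intro x hx
    have := hx.1.le
    positivity
  · rw [← aux_polar hN (fun s => (h s)^2)]
    have hi : IntegrableOn (fun x : E N => (h ‖x‖)^2) (ball 0 1) := by
      have : ContinuousOn (fun x : E N => (h ‖x‖)^2) (closedBall 0 1) := by
        refine ContinuousOn.pow (hhc.comp continuous_norm.continuousOn ?_) 2
        intro x hx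
        exact ⟨norm_nonneg _, by simpa using hx⟩
      exact (this.integrableOn_compact (isCompact_closedBall _ _)).mono_set ball_subset_closedBall
    apply setIntegral_mono_on_ae hi (aux_grad_int u hc) measurableSet_ball
    have : ∀ᵐ x : E N, x ≠ 0 := by simp [ae_iff]
    filter_upwards [this] with x hx hxb using hgrad x hxb hx
  · have hsimp : ∀ x : E N, ‖x‖ ^ α * |u x| ^ (p + 1) = (fun r => r^α * |g r|^(2 * ((p+1)/2))) ‖x‖ := by
      intro x
      simp only []
      rw [ug x, show 2 * ((p+1)/2) = p + 1 by ring]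
    simp_rw [hsimp]
    rw [aux_polar hN (fun r => r^α * |g r|^(2 * ((p+1)/2)))]
    apply mul_le_mul_of_nonneg_left _ (by positivity)
    exact aux_1d (N-1) ((p+1)/2) α (by linarith) hα hβ g h hgc hhc hd g1

lemma aux_lower {N : ℕ} (hN : 2 ≤ N) (p : ℝ) (hp : 1 < p) :
    ∃ c : ℝ, 0 < c ∧ ∃ α0 : ℝ, 0 < α0 ∧ ∀ α, α0 < α →
      c * α^(1 + 2/(p+1)) ≤ SradVal N α p := by
  have hne : Nonempty (Fin N) := ⟨⟨0, by omega⟩⟩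
  set q := (p+1)/2 with hq
  have hq1 : 1 < q := by rw [hq]; linarith
  set W : ℝ := N * volume.real (ball (0 : E N) 1) with hW
  have hW0 : 0 < W := by
    have : 0 < volume.real (ball (0 : E N) 1) :=
      ENNReal.toReal_pos (measure_ball_pos _ _ one_pos).ne' measure_ball_lt_top.ne
    have : (0:ℝ) < N := by exact_mod_cast (by omega : 0 < N)
    positivity
  have hG : 0 < Real.Gamma (q+1) := Real.Gamma_pos_of_pos (by linarith)
  set G := Real.Gamma (q+1)
  set d : ℕ := N - 1
  have hd : (1:ℝ) ≤ d := by exact_mod_cast (by omega : 1 ≤ N - 1)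
  -- constant
  refine ⟨W * ((W * (2^(q+1) * G))^(1/q))⁻¹, by positivity, 2 * d * (q-1), by
    have : 0 < q - 1 := by linarith
    positivity, ?_⟩
  intro α hα
  have hα0 : 0 < α := by
    have : 0 < q - 1 := by linarith
    have : 0 < 2 * d * (q-1) := by positivity
    linarith
  apply le_csInf
  · refine ⟨_, fun x => 1 - ‖x‖^2, ⟨?_, ?_, ?_⟩, ?_, rfl⟩
    · exact (contDiff_const.sub (contDiff_norm_sq ℝ)).contDiffOn
    · intro x hx; simp [hx]
    · exact ⟨0, by simp, by simp⟩
    · intro x y hxy; simp [hxy]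
  rintro _ ⟨u, hu, hr, rfl⟩
  have hβ2 : α / 2 ≤ α + d - d * q := by nlinarith
  obtain ⟨A, hA0, hA1, hA2⟩ := aux_rad hN α p hα0 hp (by rw [← hq]; linarith) u hu hr
  have hD := aux_den_pos hN α p hα0 hp u hu
  rw [ray]
  set D := ∫ x in ball (0 : E N) 1, ‖x‖ ^ α * |u x| ^ (p + 1)
  rw [← hq] at hA2
  rw [show 2/(p+1) = 1/q by rw [hq]; field_simp]
  rw [le_div_iff₀ (by positivity)]
  refine le_trans ?_ hA1
  have b1 : D ≤ (W * (2^(q+1) * G)) * (A^q * (α⁻¹)^(q+1)) := by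
    refine hA2.trans ?_
    have : (1 / (α + d - d * q))^(q+1) ≤ 2^(q+1) * (α⁻¹)^(q+1) := by
      rw [← Real.mul_rpow (by norm_num) (by positivity)]
      apply Real.rpow_le_rpow (by have : 0 < α + d - d * q := by linarith
                                  positivity) _ (by linarith)
      rw [one_div, ← div_eq_mul_inv, ← inv_div]
      exact inv_anti₀ (by positivity) hβ2
    calc W * (A^q * ((1 / (α + d - d * q))^(q+1) * G)) ≤ W * (A^q * ((2^(q+1) * (α⁻¹)^(q+1)) * G)) := by
          gcongr
      _ = _ := by ring
  have b2 : D^(1/q) ≤ (W * (2^(q+1) * G))^(1/q) * (A * (α^(1 + 1/q))⁻¹) := by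
    refine (Real.rpow_le_rpow hD.le b1 (by positivity)).trans (le_of_eq ?_)
    rw [Real.mul_rpow (by positivity) (by positivity), Real.mul_rpow (x := A^q) (by positivity) (by positivity),
      ← Real.rpow_mul hA0, ← Real.rpow_mul (by positivity), Real.inv_rpow hα0.le]
    rw [show q * (1/q) = 1 by field_simp, show (q+1) * (1/q) = 1 + 1/q by field_simp, Real.rpow_one]
  set K := (W * (2^(q+1) * G))^(1/q)
  have hK : 0 < K := by positivity
  have hP : 0 < α^(1 + 1/q) := by positivity
  calc W * K⁻¹ * α^(1 + 1/q) * D^(1/q) ≤ W * K⁻¹ * α^(1 + 1/q) * (K * (A * (α^(1 + 1/q))⁻¹)) := by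
        gcongr
    _ = W * A := by field_simp

lemma aux_pow_ge (α : ℝ) (hα : 4 ≤ α) : (1/16 : ℝ) ≤ (1 - 2/α)^α := by
  have hα0 : 0 < α := by linarith
  have h2 : 2/α ≤ 1/2 := by rw [div_le_iff₀ hα0]; linarith
  have h := one_add_mul_self_le_rpow_one_add (s := -(2/α)) (by linarith) (p := α/4) (by linarith)
  have h3 : 1 + α/4 * (-(2/α)) = 1/2 := by field_simp; norm_num
  rw [h3, ← sub_eq_add_neg] at h
  have h4 : (1 - 2/α)^α = ((1 - 2/α)^(α/4))^4 := by
    rw [← Real.rpow_natCast, ← Real.rpow_mul (by linarith)]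
    congr 1; push_cast; ring
  rw [h4]
  calc (1/16 : ℝ) = (1/2)^4 := by norm_num
    _ ≤ _ := pow_le_pow_left₀ (by norm_num) h 4

lemma aux_upper {N : ℕ} (hN : 2 ≤ N) (p : ℝ) (hp : 1 < p) :
    ∃ C : ℝ, 0 ≤ C ∧ ∀ α : ℝ, 4 ≤ α →
      Sval N α p ≤ C * α^(2 - (N:ℝ) + N * (2/(p+1))) := by
  have hne : Nonempty (Fin N) := ⟨⟨0, by omega⟩⟩
  let φ : ContDiffBump (0 : E N) := ⟨1/2, 1, by norm_num, by norm_num⟩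
  have hφs : ∀ x : E N, 1 ≤ ‖x‖ → φ x = 0 := fun x hx =>
    φ.zero_of_le_dist (by simpa using hx)
  have hφ1 : ContDiff ℝ 1 φ := φ.contDiff
  have hφc : HasCompactSupport φ := φ.hasCompactSupport
  set G := ∫ x, ‖fderiv ℝ φ x‖^2 with hG
  set P := ∫ x, |φ x|^(p+1) with hP
  have hG0 : 0 ≤ G := integral_nonneg fun x => by positivity
  have hGc : Continuous (fun x => ‖fderiv ℝ φ x‖^2) := (hφ1.continuous_fderiv one_ne_zero).norm.pow 2
  have hGs : HasCompactSupport (fun x => ‖fderiv ℝ φ x‖^2) :=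
    (hφc.fderiv ℝ).comp_left (g := fun L => ‖L‖^2) (by simp)
  have hPc : Continuous (fun x => |φ x|^(p+1)) :=
    φ.continuous.abs.rpow_const (fun _ => Or.inr (by linarith))
  have hPs : HasCompactSupport (fun x => |φ x|^(p+1)) :=
    hφc.comp_left (g := fun t : ℝ => |t|^(p+1)) (by
      simp [Real.zero_rpow (by linarith : p + 1 ≠ 0)])
  have hP0 : 0 < P := by
    apply hPc.integral_pos_of_hasCompactSupport_nonneg_nonzero hPs (x := 0)
    · intro x; show 0 ≤ _; positivity
    · have : φ 0 = 1 := φ.one_of_mem_closedBall (by simp [φ.rIn_pos.le])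
      simp [this]
  refine ⟨G * ((1/16 * P)^(2/(p+1)))⁻¹, by positivity, ?_⟩
  intro α hα
  have hα0 : 0 < α := by linarith
  set e : E N := EuclideanSpace.single ⟨0, by omega⟩ 1 with he
  have hen : ‖e‖ = 1 := by simp [he]
  set a : E N := (1 - 1/α) • e with ha
  have hinv : 1/α ≤ 1/4 := one_div_le_one_div_of_le (by norm_num) hα
  have han : ‖a‖ = 1 - 1/α := by
    rw [ha, norm_smul, hen, mul_one, Real.norm_eq_abs, abs_of_nonneg (by linarith)]
  set u : E N → ℝ := fun x => φ (α • (x - a)) with hu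
  have hu1 : ContDiff ℝ 1 u := hφ1.comp (by fun_prop)
  -- support
  have hsupp : ∀ x, u x ≠ 0 → ‖x‖ < 1 ∧ 1 - 2/α ≤ ‖x‖ := by
    intro x hx
    have h1 : ‖α • (x - a)‖ < 1 := by
      by_contra h
      exact hx (hφs _ (not_lt.1 h))
    rw [norm_smul, Real.norm_eq_abs, abs_of_pos hα0] at h1
    have h2 : ‖x - a‖ < 1/α := by rw [lt_div_iff₀ hα0]; linarith
    have h3 := norm_add_le (x - a) a
    have h4 := norm_sub_norm_le a x
    rw [norm_sub_rev] at h4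
    rw [sub_add_cancel] at h3
    constructor
    · linarith
    · have : 2/α = 1/α + 1/α := by ring
      linarith
  have hfd : ∀ x, ‖gradient u x‖^2 = α^2 * (fun y => ‖fderiv ℝ φ (α • y)‖^2) (x - a) := by
    intro x
    rw [aux_norm_grad]
    have h2 : HasFDerivAt (fun y : E N => α • (y - a)) (α • ContinuousLinearMap.id ℝ (E N)) x :=
      ((hasFDerivAt_id x).sub_const a).const_smul α
    have h3 := ((hφ1.differentiable one_ne_zero) (α • (x - a))).hasFDerivAt.comp x h2
    have h4 : fderiv ℝ u x = α • fderiv ℝ φ (α • (x - a)) := by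
      have := h3.fderiv
      rw [ContinuousLinearMap.comp_smul, ContinuousLinearMap.comp_id] at this
      exact this
    rw [h4, norm_smul, mul_pow, Real.norm_eq_abs, sq_abs]
  have scale : ∀ f : E N → ℝ, ∫ x, (fun y => f (α • y)) (x - a) = (α^N)⁻¹ * ∫ x, f x := by
    intro f
    rw [integral_sub_right_eq_self (fun y => f (α • y)) a,
      Measure.integral_comp_smul_of_nonneg _ _ _ (hR := hα0.le), finrank_euclideanSpace_fin,
      smul_eq_mul]
  have scalei : ∀ f : E N → ℝ, Integrable f → Integrable (fun x => (fun y => f (α • y)) (x - a)) := by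
    intro f hf
    exact (hf.comp_smul hα0.ne').comp_sub_right a
  have num : ∫ x in ball (0 : E N) 1, ‖gradient u x‖ ^ 2 ≤ α^2 * ((α^N)⁻¹ * G) := by
    rw [hG, ← scale (fun y => ‖fderiv ℝ φ y‖^2), ← integral_const_mul]
    simp_rw [hfd]
    apply setIntegral_le_integral
    · exact (scalei _ (hGc.integrable_of_hasCompactSupport hGs)).const_mul _
    · exact ae_of_all _ fun x => by show 0 ≤ _; positivity
  have den : (α^N)⁻¹ * (1/16 * P) ≤ ∫ x in ball (0 : E N) 1, ‖x‖ ^ α * |u x| ^ (p + 1) := by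
    have : (α^N)⁻¹ * (1/16 * P) = ∫ x, 1/16 * |u x|^(p+1) := by
      rw [integral_const_mul, hP, mul_left_comm, ← scale (fun y => |φ y|^(p+1))]
    rw [this, ← integral_indicator measurableSet_ball]
    apply integral_mono
    · exact (scalei _ (hPc.integrable_of_hasCompactSupport hPs)).const_mul _
    · rw [integrable_indicator_iff measurableSet_ball]
      have hcont : Continuous (fun x : E N => ‖x‖ ^ α * |u x| ^ (p + 1)) :=
        (continuous_norm.rpow_const (fun _ => Or.inr hα0.le)).mul
          (hu1.continuous.abs.rpow_const (fun _ => Or.inr (by linarith)))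
      exact (hcont.continuousOn.integrableOn_compact (isCompact_closedBall _ _)).mono_set
        ball_subset_closedBall
    · intro x
      by_cases hx : u x = 0
      · have hp1 : p + 1 ≠ 0 := by linarith
        simp [hx, Real.zero_rpow hp1, indicator]
      · obtain ⟨k1, k2⟩ := hsupp x hx
        have hm : x ∈ ball (0 : E N) 1 := by simpa using k1
        simp only [indicator_of_mem hm]
        apply mul_le_mul_of_nonneg_right _ (by positivity)
        refine (aux_pow_ge α hα).trans ?_
        have : 2/α = 2 * (1/α) := by ring
        exact Real.rpow_le_rpow (by linarith) k2 hα0.le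
  have hmem : memC u := by
    refine ⟨hu1.contDiffOn, ?_, a, ?_, ?_⟩
    · intro x hx
      by_contra h
      exact absurd (hsupp x h).1 (by linarith)
    · have : 0 < 1/α := by positivity
      rw [mem_closedBall_zero_iff, han]; linarith
    · have : φ 0 = 1 := φ.one_of_mem_closedBall (by simp [φ.rIn_pos.le])
      simp [hu, this]
  have hle : Sval N α p ≤ ray α p u := by
    apply csInf_le
    · refine ⟨0, ?_⟩
      rintro _ ⟨v, -, rfl⟩
      apply div_nonneg
      · exact integral_nonneg fun x => by positivity
      · apply Real.rpow_nonneg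
        exact integral_nonneg fun x => by positivity
    · exact ⟨u, hmem, rfl⟩
  refine hle.trans ?_
  rw [ray]
  have den2 := Real.rpow_le_rpow (by positivity) den (by positivity : 0 ≤ 2/(p+1))
  have hbase : 0 < ((α^N)⁻¹ * (1/16 * P))^(2/(p+1)) := by positivity
  calc _ ≤ α^2 * ((α^N)⁻¹ * G) / ((α^N)⁻¹ * (1/16 * P))^(2/(p+1)) := by
        apply div_le_div₀ (by positivity) num hbase den2
    _ = _ := by
        rw [Real.mul_rpow (by positivity) (by positivity), Real.inv_rpow (by positivity),
          Real.rpow_add hα0, Real.rpow_sub hα0, Real.rpow_mul hα0.le, Real.rpow_natCast,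
          Real.rpow_two]
        have : 0 < (α^N)^(2/(p+1)) := by positivity
        have : 0 < (1/16 * P)^(2/(p+1)) := by positivity
        field_simp

/-- Smets–Su–Willem key estimate: for α large, the radial ground-state level is
strictly above the ground-state level. -/
theorem stmt7 {N : ℕ} (hN : 2 ≤ N) (p : ℝ) (hp : 1 < p)
    (hsub : 3 ≤ N → p + 1 < 2 * (N : ℝ) / ((N : ℝ) - 2)) :
    ∃ αstar : ℝ, 0 < αstar ∧ ∀ α : ℝ, αstar < α →
      Sval N α p < SradVal N α p := by
  obtain ⟨c, hc, α0, hα0, hlow⟩ := aux_lower hN p hp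
  obtain ⟨C, hC, hup⟩ := aux_upper hN p hp
  set δ : ℝ := (N - 1) * ((p - 1)/(p+1)) with hδ
  have hδ0 : 0 < δ := by
    have h1 : (2:ℝ) ≤ N := by exact_mod_cast hN
    have h2 : 0 < (N:ℝ) - 1 := by linarith
    have h3 : 0 < p - 1 := by linarith
    have h4 : 0 < p + 1 := by linarith
    positivity
  obtain ⟨α1, h1⟩ := Filter.eventually_atTop.1
    ((tendsto_rpow_atTop hδ0).eventually_gt_atTop (C / c))
  refine ⟨max α0 (max 4 α1), lt_max_of_lt_left hα0, ?_⟩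
  intro α hα
  obtain ⟨k0, k⟩ := max_lt_iff.1 hα
  obtain ⟨k4, k1⟩ := max_lt_iff.1 k
  have hpos : 0 < α := by linarith
  refine (hup α k4.le).trans_lt (lt_of_lt_of_le ?_ (hlow α k0))
  have hexp : 1 + 2/(p+1) = (2 - (N:ℝ) + N * (2/(p+1))) + δ := by
    have h4 : p + 1 ≠ 0 := by linarith
    rw [hδ]; field_simp; ring
  rw [hexp, Real.rpow_add hpos _ δ]
  have h2 := h1 α k1.le
  rw [div_lt_iff₀ hc] at h2
  have h3 : 0 < α^(2 - (N:ℝ) + N * (2/(p+1))) := by positivity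
  nlinarith
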